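/- arXiv:2405.11085 — 2 statements merged into one kernel-verified Lean document; each statement's English description precedes it below -/
import Mathlib

section
/- (Completeness of the support abstraction) Let M be a d-dimensional affine continuous VASS all of whose transition matrices have only non-negative entries. Suppose (p,S) →^t (q,S') is an edge of the support abstraction SU_M with t = (p,A,b,q), and suppose p(u) is a configuration of M with S ⊆ supp(u). Then there exist a rational α ∈ (0,1] and a vector v ∈ ℚ₊^d with S' ⊆ supp(v) such that p(u) →^{αt} q(v) is a step of M. -/
namespace ACVASS

/-- Vectors of rationals indexed by counters. -/
abbrev Vec (d : ℕ) := Fin d → ℚ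

/-- A vector is componentwise non-negative (i.e. lies in ℚ₊^d). -/
def NonNeg {d : ℕ} (u : Vec d) : Prop := ∀ i, 0 ≤ u i

/-- Square integer matrices of dimension d. -/
abbrev Mat (d : ℕ) := Matrix (Fin d) (Fin d) ℤ

/-- Transitions of a d-dimensional affine continuous VASS. -/
abbrev Trans (Q : Type) (d : ℕ) := Q × Mat d × (Fin d → ℤ) × Q

def Trans.src {Q : Type} {d : ℕ} (t : Trans Q d) : Q := t.1
def Trans.mat {Q : Type} {d : ℕ} (t : Trans Q d) : Mat d := t.2.1
def Trans.upd {Q : Type} {d : ℕ} (t : Trans Q d) : Fin d → ℤ := t.2.2.1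
def Trans.tgt {Q : Type} {d : ℕ} (t : Trans Q d) : Q := t.2.2.2

/-- Cast an integer matrix to a rational matrix. -/
def castMat {d : ℕ} (A : Mat d) : Matrix (Fin d) (Fin d) ℚ := A.map (Int.cast)

/-- Cast an integer vector to a rational vector. -/
def castVec {d : ℕ} (b : Fin d → ℤ) : Vec d := fun i => (b i : ℚ)

/-- A d-dimensional affine continuous VASS: a finite set of transitions. -/
structure ACV (Q : Type) (d : ℕ) where
  T : Finset (Trans Q d)

/-- Configurations: a state together with a vector of counter values. -/
abbrev Conf (Q : Type) (d : ℕ) := Q × Vec d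

/-- A step `p(u) →^{αt} q(v)`: `t` is a transition of `M`, `α ∈ (0,1]`, both
configurations are non-negative and `v = A·u + α·b`. -/
def Step {Q : Type} {d : ℕ} (M : ACV Q d) (C : Conf Q d) (α : ℚ) (t : Trans Q d)
    (C' : Conf Q d) : Prop :=
  t ∈ M.T ∧ 0 < α ∧ α ≤ 1 ∧ C.1 = t.src ∧ C'.1 = t.tgt ∧
    NonNeg C.2 ∧ NonNeg C'.2 ∧
    C'.2 = (castMat t.mat).mulVec C.2 + α • castVec t.upd

/-- Firing sequences. -/
abbrev FSeq (Q : Type) (d : ℕ) := List (ℚ × Trans Q d)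

/-- `Run M C π C'` : `C →^π C'`, i.e. the steps of `π` can be realized in order. -/
inductive Run {Q : Type} {d : ℕ} (M : ACV Q d) : Conf Q d → FSeq Q d → Conf Q d → Prop
  | nil (C : Conf Q d) (h : NonNeg C.2) : Run M C [] C
  | cons {C C' C'' : Conf Q d} {α : ℚ} {t : Trans Q d} {π : FSeq Q d} :
      Step M C α t C' → Run M C' π C'' → Run M C ((α, t) :: π) C''

/-- `C →* C'`. -/
def Reach {Q : Type} {d : ℕ} (M : ACV Q d) (C C' : Conf Q d) : Prop := ∃ π, Run M C π C'

/-- `p(u)` covers `q(v)`: `p(u) →* q(v')` for some `v' ≥ v`. -/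
def Covers {Q : Type} {d : ℕ} (M : ACV Q d) (C C' : Conf Q d) : Prop :=
  ∃ v', C'.2 ≤ v' ∧ Reach M C (C'.1, v')

/-- Support of a vector. -/
def supp {d : ℕ} (u : Vec d) : Set (Fin d) := {i | u i ≠ 0}

/-- `supp_t^-(x) = {y : A(x,y) > 0}`. -/
def suppMinus {Q : Type} {d : ℕ} (t : Trans Q d) (x : Fin d) : Set (Fin d) :=
  {y | 0 < t.mat x y}

/-- `supp_t^+ = {x : b(x) > 0}`. -/
def suppPlus {Q : Type} {d : ℕ} (t : Trans Q d) : Set (Fin d) := {x | 0 < t.upd x}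

/-- `supp_t^p(x)`: counters that can pump `x` via transition `t`. -/
def suppPump {Q : Type} {d : ℕ} (t : Trans Q d) (x : Fin d) : Set (Fin d) :=
  {y | (y ≠ x ∧ 0 < t.mat x y) ∨ (y = x ∧ 1 < t.mat x y)}

/-- The set of transitions occurring in a firing sequence. -/
def seqSupp {Q : Type} {d : ℕ} (π : FSeq Q d) : Set (Trans Q d) := {t | ∃ α, (α, t) ∈ π}

/-- Non-negative matrix. -/
def NonNegMat {d : ℕ} (A : Mat d) : Prop := ∀ i j, 0 ≤ A i j

/-- Non-negative self-loop matrix: non-negative with no zero diagonal entry. -/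
def SelfLoopMat {d : ℕ} (A : Mat d) : Prop := NonNegMat A ∧ ∀ i, A i i ≠ 0

/-- All transition matrices of `M` are non-negative. -/
def NonNegVASS {Q : Type} {d : ℕ} (M : ACV Q d) : Prop := ∀ t ∈ M.T, NonNegMat t.mat

/-- All transition matrices of `M` are non-negative self-loop matrices. -/
def SelfLoopVASS {Q : Type} {d : ℕ} (M : ACV Q d) : Prop := ∀ t ∈ M.T, SelfLoopMat t.mat

/-- `β·π`: scale all fractions of a firing sequence by `β`. -/
def scaleSeq {Q : Type} {d : ℕ} (β : ℚ) (π : FSeq Q d) : FSeq Q d :=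
  π.map (fun p => (β * p.1, p.2))

/-- Counter `x` is pumped by transition `t` in the run obtained by firing `π` from `C`:
some step of the run uses `t` from a source configuration `C₁` with a counter
`y ∈ supp_t^p(x)` of positive value. -/
def PumpedBy {Q : Type} {d : ℕ} (M : ACV Q d) (C : Conf Q d) (π : FSeq Q d)
    (t : Trans Q d) (x : Fin d) : Prop :=
  ∃ (π₁ : FSeq Q d) (α : ℚ) (π₂ : FSeq Q d) (C₁ C₂ : Conf Q d),
    π = π₁ ++ (α, t) :: π₂ ∧ Run M C π₁ C₁ ∧ Step M C₁ α t C₂ ∧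
    ∃ y ∈ suppPump t x, 0 < C₁.2 y

/-- Counter `x` is pumped in the run obtained by firing `π` from `C`. -/
def Pumps {Q : Type} {d : ℕ} (M : ACV Q d) (C : Conf Q d) (π : FSeq Q d) (x : Fin d) : Prop :=
  ∃ t, PumpedBy M C π t x

/-- Edges of the support abstraction `SU_M`. -/
def SuppEdge {Q : Type} {d : ℕ} (M : ACV Q d) (v : Q × Set (Fin d)) (t : Trans Q d)
    (v' : Q × Set (Fin d)) : Prop :=
  t ∈ M.T ∧ v.1 = t.src ∧ v'.1 = t.tgt ∧
    ∀ x : Fin d,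
      (t.upd x < 0 → (suppMinus t x ∩ v.2).Nonempty) ∧
      (0 < t.upd x → x ∈ v'.2) ∧
      (x ∈ v'.2 → 0 < t.upd x ∨ (suppMinus t x ∩ v.2).Nonempty)

/-- Directed-path reachability in the support abstraction `SU_M`. -/
def SuppReach {Q : Type} {d : ℕ} (M : ACV Q d) :
    Q × Set (Fin d) → Q × Set (Fin d) → Prop :=
  Relation.ReflTransGen (fun a b => ∃ t, SuppEdge M a t b)

/-- A step of the continuous VASS `M_X` (only the counters in `X` are tracked). -/
def StepX {Q : Type} {d : ℕ} (M : ACV Q d) (X : Set (Fin d)) (p : Q) (u : Vec d) (α : ℚ)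
    (t : Trans Q d) (q : Q) (v : Vec d) : Prop :=
  t ∈ M.T ∧ 0 < α ∧ α ≤ 1 ∧ p = t.src ∧ q = t.tgt ∧
    (∀ i ∈ X, 0 ≤ u i) ∧ (∀ i ∈ X, 0 ≤ v i) ∧ (∀ i ∈ X, v i = u i + α * castVec t.upd i)

/-- A run of the continuous VASS `M_X`; vectors matter only on the counters of `X`. -/
inductive RunX {Q : Type} {d : ℕ} (M : ACV Q d) (X : Set (Fin d)) :
    Q → Vec d → FSeq Q d → Q → Vec d → Prop
  | nil (p : Q) (u v : Vec d) (h : ∀ i ∈ X, 0 ≤ u i ∧ u i = v i) : RunX M X p u [] p v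
  | cons {p r q : Q} {u w v : Vec d} {α : ℚ} {t : Trans Q d} {π : FSeq Q d} :
      StepX M X p u α t r w → RunX M X r w π q v → RunX M X p u ((α, t) :: π) q v

/-- One edge of the graph `G_M` using only transitions from `S`. -/
def GStep {Q : Type} {d : ℕ} (S : Set (Trans Q d)) (a b : Q) : Prop :=
  ∃ t ∈ S, t.src = a ∧ t.tgt = b

/-- A (possibly empty) path in the graph `G_M` using only transitions from `S`. -/
def GPath {Q : Type} {d : ℕ} (S : Set (Trans Q d)) : Q → Q → Prop :=
  Relation.ReflTransGen (GStep S)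

/-- `Rep-Half(π)`: the i-th fraction of `π` is divided by `2^i`. -/
def repHalf {Q : Type} {d : ℕ} : FSeq Q d → FSeq Q d
  | [] => []
  | (α, t) :: rest => (α / 2, t) :: scaleSeq (1 / 2) (repHalf rest)

/-- Descending partial product `A_{ℓ-1} ⋯ A_j` (0-indexed); for `j = ℓ` this is
the identity matrix. -/
def descProd {d ℓ : ℕ} (A : Fin ℓ → Matrix (Fin d) (Fin d) ℚ) (j : ℕ) :
    Matrix (Fin d) (Fin d) ℚ :=
  (((List.finRange ℓ).drop j).reverse.map A).prod

/-- The permutation matrix `P_σ` with `P_σ(i,j) = 1` iff `σ(i) = j`. -/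
def permMat {n : ℕ} (σ : Equiv.Perm (Fin n)) : Matrix (Fin n) (Fin n) ℤ :=
  Matrix.of fun i j => if σ i = j then 1 else 0

/-- A matrix is a permutation matrix. -/
def IsPermMat {d : ℕ} (A : Mat d) : Prop := ∃ σ : Equiv.Perm (Fin d), A = permMat σ

/-- The n×n block-diagonal matrix with blocks `I_o`, `A`, `I_{n-o-k}`:
`A` occupies rows/columns `o,…,o+k-1` and the rest is identity. -/
def applyBlock {k : ℕ} (A : Matrix (Fin k) (Fin k) ℤ) (o n : ℕ) :
    Matrix (Fin n) (Fin n) ℤ :=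
  Matrix.of fun r c =>
    if h : o ≤ r.val ∧ r.val < o + k ∧ o ≤ c.val ∧ c.val < o + k then
      A ⟨r.val - o, by omega⟩ ⟨c.val - o, by omega⟩
    else if r.val = c.val then 1 else 0

/-- Transitions of a continuous VASS (with identity matrices left implicit). -/
abbrev CTrans (Q : Type) (d : ℕ) := Q × (Fin d → ℤ) × Q

/-- Zero-tests. -/
abbrev ZTest (Q : Type) (d : ℕ) := Q × Fin d × Q

/-- A d-dimensional continuous VASS with zero-tests. -/
structure CVZ (Q : Type) (d : ℕ) where
  T : Finset (CTrans Q d)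
  T0 : Finset (ZTest Q d)

/-- A transition step of a continuous VASS with zero-tests. -/
def CStep {Q : Type} {d : ℕ} (M : CVZ Q d) (C : Conf Q d) (α : ℚ) (t : CTrans Q d)
    (C' : Conf Q d) : Prop :=
  t ∈ M.T ∧ 0 < α ∧ α ≤ 1 ∧ C.1 = t.1 ∧ C'.1 = t.2.2 ∧
    NonNeg C.2 ∧ NonNeg C'.2 ∧ C'.2 = C.2 + α • castVec t.2.1

/-- A zero-test step of a continuous VASS with zero-tests. -/
def ZStep {Q : Type} {d : ℕ} (M : CVZ Q d) (C : Conf Q d) (t : ZTest Q d)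
    (C' : Conf Q d) : Prop :=
  t ∈ M.T0 ∧ C.1 = t.1 ∧ C'.1 = t.2.2 ∧ NonNeg C.2 ∧ C.2 t.2.1 = 0 ∧ C'.2 = C.2

/-- A d-dimensional continuous VASS. -/
structure CV (Q : Type) (d : ℕ) where
  T : Finset (CTrans Q d)

/-- A step of a continuous VASS. -/
def CVStep {Q : Type} {d : ℕ} (M : CV Q d) (C : Conf Q d) (α : ℚ) (t : CTrans Q d)
    (C' : Conf Q d) : Prop :=
  t ∈ M.T ∧ 0 < α ∧ α ≤ 1 ∧ C.1 = t.1 ∧ C'.1 = t.2.2 ∧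
    NonNeg C.2 ∧ NonNeg C'.2 ∧ C'.2 = C.2 + α • castVec t.2.1

/-- Reachability (`→*`) in a continuous VASS. -/
def CVReach {Q : Type} {d : ℕ} (M : CV Q d) : Conf Q d → Conf Q d → Prop :=
  Relation.ReflTransGen (fun C C' => ∃ α t, CVStep M C α t C')


/-- Completeness of the support abstraction. -/
theorem support_abstraction_complete
    {Q : Type} [Fintype Q] {d : ℕ} (M : ACV Q d) (hM : NonNegVASS M)
    (p q : Q) (S S' : Set (Fin d)) (t : Trans Q d)
    (hedge : SuppEdge M (p, S) t (q, S'))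
    (u : Vec d) (hu : NonNeg u) (hsub : S ⊆ supp u) :
    ∃ (α : ℚ) (v : Vec d), 0 < α ∧ α ≤ 1 ∧ NonNeg v ∧ S' ⊆ supp v ∧
      Step M (p, u) α t (q, v) := by
  obtain ⟨htM, hsrc, htgt, hx⟩ := hedge
  set w : Vec d := (castMat t.mat).mulVec u with hw
  have hA : ∀ x y, (0 : ℚ) ≤ (castMat t.mat) x y := fun x y => by
    simpa [castMat] using hM t htM x y
  have hw0 : ∀ x, 0 ≤ w x := fun x =>
    Finset.sum_nonneg fun y _ => mul_nonneg (hA x y) (hu y)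
  have hwpos : ∀ x, (suppMinus t x ∩ S).Nonempty → 0 < w x := by
    rintro x ⟨y, hy, hyS⟩
    refine Finset.sum_pos' (fun y _ => mul_nonneg (hA x y) (hu y)) ⟨y, Finset.mem_univ _, ?_⟩
    have h1 : (0 : ℚ) < (castMat t.mat) x y := by
      have : 0 < t.mat x y := hy
      simpa [castMat] using this
    exact mul_pos h1 (lt_of_le_of_ne (hu y) (Ne.symm (hsub hyS)))
  have hev : ∀ᶠ α in nhdsWithin (0 : ℚ) (Set.Ioi 0),
      ∀ x, 0 < w x → 0 < w x + α * (t.upd x : ℚ) := by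
    rw [Filter.eventually_all]
    intro x
    by_cases h : 0 < w x
    · have hc : Continuous fun α : ℚ => w x + α * (t.upd x : ℚ) := by fun_prop
      have h2 := (hc.continuousAt (x := (0 : ℚ))).eventually (lt_mem_nhds (a := 0) (by simpa using h))
      filter_upwards [nhdsWithin_le_nhds h2] with α hα _ using hα
    · exact Filter.Eventually.of_forall fun α h' => absurd h' h
  have hle : ∀ᶠ α in nhdsWithin (0 : ℚ) (Set.Ioi 0), α ≤ 1 := 
    nhdsWithin_le_nhds (ge_mem_nhds one_pos)
  obtain ⟨α, ⟨h, hα1⟩, hα0⟩ := ((hev.and hle).and self_mem_nhdsWithin).exists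
  have hα0 : 0 < α := hα0
  have hv : NonNeg (w + α • castVec t.upd) := by
    intro x
    change 0 ≤ w x + α * (t.upd x : ℚ)
    rcases lt_or_ge (t.upd x) 0 with hb | hb
    · exact (h x (hwpos x ((hx x).1 hb))).le
    · have : (0 : ℚ) ≤ t.upd x := by exact_mod_cast hb
      exact add_nonneg (hw0 x) (mul_nonneg hα0.le this)
  refine ⟨α, w + α • castVec t.upd, hα0, hα1, hv, ?_, htM, hα0, hα1, hsrc, htgt, hu, hv, rfl⟩
  intro x hxS
  change w x + α * (t.upd x : ℚ) ≠ 0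
  rcases (hx x).2.2 hxS with hb | hb
  · have : (0 : ℚ) < t.upd x := by exact_mod_cast hb
    exact (add_pos_of_nonneg_of_pos (hw0 x) (mul_pos hα0 this)).ne'
  · exact (h x (hwpos x hb)).ne'

end ACVASS
end

section
/- Let M = (Q,T) be a d-dimensional affine continuous VASS in which the matrix of every transition is a d×d permutation matrix and every transition t = (p,A,b,q) satisfies b = 0 or A = I. Define the d-dimensional continuous VASS M' with states {q_π : q ∈ Q, π a permutation of {1,…,d}} and the following transitions: for each permutation π and each t = (p,A,0,q) ∈ T with A a permutation matrix, a transition from p_π to q_{π'} with additive update 0, where π' is the unique permutation with P_{π'} = P_π · A^{-1}; and for each t = (p,I,b,q) ∈ T, a transition from p_π to q_π with additive update P_π·b. Then for all u, v ∈ ℚ₊^d and states p, q ∈ Q: p(u) →* q(v) in M if and only if there exists a permutation σ of {1,…,d} such that p_{id}(u) →* q_σ(P_σ·v) in M', where id is the identity permutation. -/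
namespace ACVASS

theorem castPerm_mulVec {d : ℕ} (σ : Equiv.Perm (Fin d)) (v : Vec d) :
    (castMat (permMat σ)).mulVec v = v ∘ σ := by
  ext i
  simp [castMat, permMat, Matrix.mulVec, dotProduct]

theorem permMat_mulVec {d : ℕ} (σ : Equiv.Perm (Fin d)) (v : Fin d → ℤ) :
    (permMat σ).mulVec v = v ∘ σ := by
  ext i
  simp [permMat, Matrix.mulVec, dotProduct]

theorem permMat_mul {d : ℕ} (σ τ : Equiv.Perm (Fin d)) :
    permMat σ * permMat τ = permMat (τ * σ) := by
  ext i j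
  rw [Matrix.mul_apply, Finset.sum_eq_single (σ i)]
  · by_cases h : τ (σ i) = j <;> simp [permMat, h]
  · intro k _ hk
    simp [permMat, hk.symm]
  · simp

theorem permMat_one {d : ℕ} : permMat (1 : Equiv.Perm (Fin d)) = 1 := by
  ext i j
  by_cases h : i = j <;> simp [permMat, Matrix.one_apply, h]

theorem permMat_inv {d : ℕ} (τ : Equiv.Perm (Fin d)) :
    (permMat τ)⁻¹ = permMat τ⁻¹ := by
  apply Matrix.inv_eq_left_inv
  rw [permMat_mul, mul_inv_cancel, permMat_one]

theorem permMat_inj {d : ℕ} {σ τ : Equiv.Perm (Fin d)} (h : permMat σ = permMat τ) :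
    σ = τ := by
  ext i
  have := congrFun (congrFun h i) (σ i)
  simp only [permMat, Matrix.of_apply, if_true] at this
  by_cases h' : τ i = σ i
  · rw [h']
  · simp [h'] at this

theorem castOne_mulVec {d : ℕ} (v : Vec d) : (castMat (1 : Mat d)).mulVec v = v := by
  rw [← permMat_one, castPerm_mulVec]; rfl

theorem castVec_zero {d : ℕ} : castVec (0 : Fin d → ℤ) = 0 := by
  ext i; simp [castVec]

theorem castVec_comp {d : ℕ} (b : Fin d → ℤ) (π : Equiv.Perm (Fin d)) :
    castVec (b ∘ π) = castVec b ∘ π := rfl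

/-- The defining property of the transitions of the reduced VASS. -/
def RedSpec {Q : Type} {d : ℕ} (M : ACV Q d) (M' : CV (Q × Equiv.Perm (Fin d)) d) : Prop :=
  ∀ tr : CTrans (Q × Equiv.Perm (Fin d)) d, tr ∈ M'.T ↔
      ((∃ (p q : Q) (A : Mat d) (π π' : Equiv.Perm (Fin d)),
          (p, A, (0 : Fin d → ℤ), q) ∈ M.T ∧ IsPermMat A ∧
          permMat π' = permMat π * A⁻¹ ∧
          tr = ((p, π), (0 : Fin d → ℤ), (q, π'))) ∨
       (∃ (p q : Q) (b : Fin d → ℤ) (π : Equiv.Perm (Fin d)),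
          (p, (1 : Mat d), b, q) ∈ M.T ∧
          tr = ((p, π), (permMat π).mulVec b, (q, π))))

theorem step_fwd {Q : Type} {d : ℕ} (M : ACV Q d)
    (hperm : ∀ t ∈ M.T, IsPermMat t.mat)
    (hform : ∀ t ∈ M.T, t.upd = 0 ∨ t.mat = 1)
    (M' : CV (Q × Equiv.Perm (Fin d)) d) (hM' : RedSpec M M')
    {C C' : Conf Q d} {α : ℚ} {t : Trans Q d} (h : Step M C α t C')
    (π : Equiv.Perm (Fin d)) :
    ∃ π' t', CVStep M' ((C.1, π), C.2 ∘ π) α t' ((C'.1, π'), C'.2 ∘ π') := by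
  obtain ⟨ht, h0, h1, hs, hq, hn, hn', he⟩ := h
  have hp := hperm t ht
  have hf := hform t ht
  obtain ⟨p, A, b, q⟩ := t
  obtain ⟨c, u⟩ := C
  obtain ⟨c', v⟩ := C'
  simp only [Trans.src, Trans.tgt, Trans.mat, Trans.upd] at *
  subst hs hq
  rcases hf with rfl | rfl
  · obtain ⟨τ, rfl⟩ := hp
    refine ⟨τ⁻¹ * π, ((c, π), 0, (c', τ⁻¹ * π)), ?_, h0, h1, rfl, rfl,
      fun i => hn _, fun i => hn' _, ?_⟩
    · rw [hM']
      exact Or.inl ⟨c, c', _, π, τ⁻¹ * π, ht, ⟨τ, rfl⟩, by rw [permMat_inv, permMat_mul], rfl⟩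
    · rw [he, castPerm_mulVec]
      ext i
      simp [castVec_zero]
  · refine ⟨π, ((c, π), (permMat π).mulVec b, (c', π)), ?_, h0, h1, rfl, rfl,
      fun i => hn _, fun i => hn' _, ?_⟩
    · rw [hM']
      exact Or.inr ⟨c, c', b, π, ht, rfl⟩
    · simp only [he, castOne_mulVec, permMat_mulVec, castVec_comp]
      rfl

theorem step_bwd {Q : Type} {d : ℕ} (M : ACV Q d)
    (M' : CV (Q × Equiv.Perm (Fin d)) d) (hM' : RedSpec M M')
    {D D' : Conf (Q × Equiv.Perm (Fin d)) d} {α : ℚ} {t' : CTrans (Q × Equiv.Perm (Fin d)) d}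
    (h : CVStep M' D α t' D') :
    ∃ t, Step M (D.1.1, D.2 ∘ D.1.2.symm) α t (D'.1.1, D'.2 ∘ D'.1.2.symm) := by
  obtain ⟨ht, h0, h1, hs, hq, hn, hn', he⟩ := h
  obtain ⟨⟨c, ρ⟩, u⟩ := D
  obtain ⟨⟨c', ρ'⟩, v⟩ := D'
  rw [hM'] at ht
  rcases ht with ⟨p, q, A, π, π', hT, ⟨τ, rfl⟩, hπ, rfl⟩ | ⟨p, q, b, π, hT, rfl⟩
  · simp only [Prod.mk.injEq] at *
    obtain ⟨rfl, rfl⟩ := hs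
    obtain ⟨rfl, rfl⟩ := hq
    rw [permMat_inv, permMat_mul] at hπ
    have hπ := permMat_inj hπ
    subst hπ
    refine ⟨_, hT, h0, h1, rfl, rfl, fun i => hn _, fun i => hn' _, ?_⟩
    simp only [Trans.mat, Trans.upd, castPerm_mulVec, castVec_zero, he]
    ext i
    simp only [smul_zero, add_zero]
    rfl
  · simp only [Prod.mk.injEq] at *
    obtain ⟨rfl, rfl⟩ := hs
    obtain ⟨rfl, rfl⟩ := hq
    refine ⟨_, hT, h0, h1, rfl, rfl, fun i => hn _, fun i => hn' _, ?_⟩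
    simp only [Trans.mat, Trans.upd, castOne_mulVec, he, permMat_mulVec, castVec_comp]
    ext i
    simp

theorem run_fwd {Q : Type} {d : ℕ} (M : ACV Q d)
    (hperm : ∀ t ∈ M.T, IsPermMat t.mat)
    (hform : ∀ t ∈ M.T, t.upd = 0 ∨ t.mat = 1)
    (M' : CV (Q × Equiv.Perm (Fin d)) d) (hM' : RedSpec M M')
    {C C' : Conf Q d} {s : FSeq Q d} (h : Run M C s C') :
    ∀ π : Equiv.Perm (Fin d),
    ∃ σ : Equiv.Perm (Fin d), CVReach M' ((C.1, π), C.2 ∘ π) ((C'.1, σ), C'.2 ∘ σ) := by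
  induction h with
  | nil C h => exact fun π => ⟨π, Relation.ReflTransGen.refl⟩
  | cons hstep _ ih =>
    intro π
    obtain ⟨π', t', ht'⟩ := step_fwd M hperm hform M' hM' hstep π
    obtain ⟨σ, hσ⟩ := ih π'
    exact ⟨σ, Relation.ReflTransGen.head ⟨_, t', ht'⟩ hσ⟩

theorem reach_bwd {Q : Type} {d : ℕ} (M : ACV Q d)
    (M' : CV (Q × Equiv.Perm (Fin d)) d) (hM' : RedSpec M M')
    {D D' : Conf (Q × Equiv.Perm (Fin d)) d} (hn : NonNeg D'.2) (h : CVReach M' D D') :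
    Reach M (D.1.1, D.2 ∘ D.1.2.symm) (D'.1.1, D'.2 ∘ D'.1.2.symm) := by
  induction h using Relation.ReflTransGen.head_induction_on with
  | refl => exact ⟨[], Run.nil _ fun i => hn _⟩
  | head hstep _ ih =>
    obtain ⟨α, t', h'⟩ := hstep
    obtain ⟨t, ht⟩ := step_bwd M M' hM' h'
    obtain ⟨s, hs⟩ := ih
    exact ⟨_, Run.cons ht hs⟩

/-- affine continuous VASS with permutation matrices reduce to
continuous VASS whose states additionally record the current renaming. -/
theorem permutation_vass_reduction
    {Q : Type} [Fintype Q] {d : ℕ} (M : ACV Q d)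
    (hperm : ∀ t ∈ M.T, IsPermMat t.mat)
    (hform : ∀ t ∈ M.T, t.upd = 0 ∨ t.mat = 1)
    (M' : CV (Q × Equiv.Perm (Fin d)) d)
    (hM' : ∀ tr : CTrans (Q × Equiv.Perm (Fin d)) d, tr ∈ M'.T ↔
      ((∃ (p q : Q) (A : Mat d) (π π' : Equiv.Perm (Fin d)),
          (p, A, (0 : Fin d → ℤ), q) ∈ M.T ∧ IsPermMat A ∧
          permMat π' = permMat π * A⁻¹ ∧
          tr = ((p, π), (0 : Fin d → ℤ), (q, π'))) ∨
       (∃ (p q : Q) (b : Fin d → ℤ) (π : Equiv.Perm (Fin d)),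
          (p, (1 : Mat d), b, q) ∈ M.T ∧
          tr = ((p, π), (permMat π).mulVec b, (q, π)))))
    (p q : Q) (u v : Vec d) (hu : NonNeg u) (hv : NonNeg v) :
    Reach M (p, u) (q, v) ↔
      ∃ σ : Equiv.Perm (Fin d),
        CVReach M' ((p, 1), u) ((q, σ), (castMat (permMat σ)).mulVec v) := by
  constructor
  · rintro ⟨s, hs⟩
    obtain ⟨σ, hσ⟩ := run_fwd M hperm hform M' hM' hs 1
    refine ⟨σ, ?_⟩
    rw [castPerm_mulVec]
    exact hσ
  · rintro ⟨σ, hσ⟩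
    rw [castPerm_mulVec] at hσ
    have := reach_bwd M M' hM' (fun i => hv _) hσ
    have e1 : u ∘ (1 : Equiv.Perm (Fin d)).symm = u := rfl
    have e2 : (v ∘ σ) ∘ σ.symm = v := by ext i; simp
    simp only [e1, e2] at this
    exact this

end ACVASS
end
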